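/- There exist a constant γ > 0 depending only on p and a constant S₀ ∈ ℝ depending only on N and p such that for every r₀ > 0, every interval I, every classical solution w of (eqw) on [−1,1]×I, and every s in the interior of I with s ≥ max(S₀, S₀ − 2·log r₀), the function σ ↦ F(w(σ),σ) is differentiable at s and satisfies d/ds F(w(s),s) ≤ γ·e^{−s}·F(w(s),s) − (2/(p−1))·∫_{−1}^{1} (∂ₛw(y,s))² ρ(y)/(1−y²) dy. -/

import Mathlib

/-!
Write `α = 2 / (p - 1)`, `t = e^{-s}`, `b = (N - 1) / (r₀ + y e^{-s})`. Differentiating `F` under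
the integral sign, inserting the equation and integrating by parts gives `dE/ds` equal to
`-2α ∫ (∂ₛw)² ρ/(1-y²) + t ∫ b ∂ᵧw ∂ₛw ρ`, while the correction `-t ∫ w ∂ₛw ρ` contributes
`t (∫ (∂ᵧw)² (1-y²) ρ + 2 (p+1)/(p-1)² ∫ w² ρ - ∫ |w|^{p+1} ρ)` plus terms containing a factor `∂ₛw`
or an extra factor `t b`. With `γ = (p + 3) / 2`, strictly between `2` and `p + 1`, the difference
between `γ t E` and this main contribution is coercive in `∂ᵧw` and `w`. The remaining terms are
absorbed by Young's inequality into this coercive part and into half of the dissipation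
`2α ∫ (∂ₛw)² ρ/(1-y²)`, once `t`, `t b` and `t b²` are small; the condition on `s` ensures that
uniformly in `r₀` (`small_bounds`). The term `4α t ∫ w ∂ₛw ρ/(1-y²)` needs a Hardy inequality, which
follows from the identity `∫ (y ρ w²)' dy = 0`.

All integrations by parts, including the Hardy identity, amount to subtracting one exact
`y`-derivative whose primitive vanishes at `y = ±1` (`slice_ineq`); the rest is a pointwise
inequality between quadratic forms (`quad_ineq`).
-/

/- STATEMENT 0: Existence of γ(p) > 0 and S₀(N,p) such that along any classical
solution of (eqw), the functional F(w(s),s) satisfies the differential inequality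
d/ds F(w(s),s) ≤ γ e^{-s} F(w(s),s) - (2/(p-1)) ∫ (∂ₛw)² ρ/(1-y²). -/

open Set MeasureTheory

noncomputable section

/-- The weight ρ(y) = (1-y²)^{2/(p-1)}. -/
def rho (p y : ℝ) : ℝ := (1 - y ^ 2) ^ (2 / (p - 1))

/-- Partial derivative in the second (time) variable. -/
def dS (w : ℝ → ℝ → ℝ) (y s : ℝ) : ℝ := deriv (fun σ => w y σ) s

/-- Partial derivative in the first (space) variable. -/
def dY (w : ℝ → ℝ → ℝ) (y s : ℝ) : ℝ := deriv (fun z => w z s) y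

/-- `w` is a classical solution of equation (eqw) on `[-1,1] × I` with parameter `r₀`:
it is C² there, satisfies `r₀ + y e^{-s} > 0`, and satisfies the PDE
∂ₛ²w = (1/ρ)∂ᵧ(ρ(1-y²)∂ᵧw) - (2(p+1)/(p-1)²)w + |w|^{p-1}w - ((p+3)/(p-1))∂ₛw
        - 2y ∂ᵧ∂ₛw + e^{-s}((N-1)/(r₀+ye^{-s}))∂ᵧw
for all y ∈ (-1,1), s ∈ I. -/
def IsSolW (p : ℝ) (N : ℕ) (r₀ : ℝ) (I : Set ℝ) (w : ℝ → ℝ → ℝ) : Prop :=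
  ContDiffOn ℝ 2 (fun q : ℝ × ℝ => w q.1 q.2) (Set.Icc (-1 : ℝ) 1 ×ˢ I) ∧
  (∀ y ∈ Set.Icc (-1 : ℝ) 1, ∀ s ∈ I, 0 < r₀ + y * Real.exp (-s)) ∧
  (∀ y ∈ Set.Ioo (-1 : ℝ) 1, ∀ s ∈ I,
    deriv (fun σ => dS w y σ) s =
      (1 / rho p y) * deriv (fun z => rho p z * (1 - z ^ 2) * dY w z s) y
        - 2 * (p + 1) / (p - 1) ^ 2 * w y s
        + |w y s| ^ (p - 1) * w y s
        - (p + 3) / (p - 1) * dS w y s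
        - 2 * y * deriv (fun z => dS w z s) y
        + Real.exp (-s) * (((N : ℝ) - 1) / (r₀ + y * Real.exp (-s))) * dY w y s)

/-- The energy E(w(s)). -/
def Ew (p : ℝ) (w : ℝ → ℝ → ℝ) (s : ℝ) : ℝ :=
  ∫ y in (-1 : ℝ)..1,
    ((1 / 2) * dS w y s ^ 2 + (1 / 2) * dY w y s ^ 2 * (1 - y ^ 2)
      + (p + 1) / (p - 1) ^ 2 * w y s ^ 2
      - (1 / (p + 1)) * |w y s| ^ (p + 1)) * rho p y

/-- The functional F(w(s),s) = E(w(s)) - e^{-s} ∫ w ∂ₛw ρ. -/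
def Fw (p : ℝ) (w : ℝ → ℝ → ℝ) (s : ℝ) : ℝ :=
  Ew p w s - Real.exp (-s) * ∫ y in (-1 : ℝ)..1, w y s * dS w y s * rho p y

/-! ### Partial derivatives up to the boundary and differentiation under the integral -/

/-- `Wy, Ws, Wyy, Wys, Wss` are the first and second partial derivatives of `w` on the open
rectangle `(-1,1) × (a,b)`, extended continuously (like `w` itself) to the closed one. They replace
`dY w` and `dS w`, whose values at `y = ±1` may be junk because `w` is unconstrained for
`|y| > 1`. -/
structure Partials (w Wy Ws Wyy Wys Wss : ℝ → ℝ → ℝ) (a b : ℝ) : Prop where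
  c0 : ContinuousOn (fun q : ℝ × ℝ => w q.1 q.2) (Icc (-1) 1 ×ˢ Icc a b)
  cy : ContinuousOn (fun q : ℝ × ℝ => Wy q.1 q.2) (Icc (-1) 1 ×ˢ Icc a b)
  cs : ContinuousOn (fun q : ℝ × ℝ => Ws q.1 q.2) (Icc (-1) 1 ×ˢ Icc a b)
  cyy : ContinuousOn (fun q : ℝ × ℝ => Wyy q.1 q.2) (Icc (-1) 1 ×ˢ Icc a b)
  cys : ContinuousOn (fun q : ℝ × ℝ => Wys q.1 q.2) (Icc (-1) 1 ×ˢ Icc a b)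
  css : ContinuousOn (fun q : ℝ × ℝ => Wss q.1 q.2) (Icc (-1) 1 ×ˢ Icc a b)
  dy : ∀ y ∈ Ioo (-1 : ℝ) 1, ∀ s ∈ Ioo a b, HasDerivAt (fun z => w z s) (Wy y s) y
  ds : ∀ y ∈ Ioo (-1 : ℝ) 1, ∀ s ∈ Ioo a b, HasDerivAt (fun σ => w y σ) (Ws y s) s
  dyy : ∀ y ∈ Ioo (-1 : ℝ) 1, ∀ s ∈ Ioo a b, HasDerivAt (fun z => Wy z s) (Wyy y s) y
  dys : ∀ y ∈ Ioo (-1 : ℝ) 1, ∀ s ∈ Ioo a b, HasDerivAt (fun σ => Wy y σ) (Wys y s) s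
  dsy : ∀ y ∈ Ioo (-1 : ℝ) 1, ∀ s ∈ Ioo a b, HasDerivAt (fun z => Ws z s) (Wys y s) y
  dss : ∀ y ∈ Ioo (-1 : ℝ) 1, ∀ s ∈ Ioo a b, HasDerivAt (fun σ => Ws y σ) (Wss y s) s

lemma exists_partials {w : ℝ → ℝ → ℝ} {a b : ℝ} (hab : a < b)
    (hw : ContDiffOn ℝ 2 (fun q : ℝ × ℝ => w q.1 q.2) (Icc (-1) 1 ×ˢ Icc a b)) :
    ∃ Wy Ws Wyy Wys Wss : ℝ → ℝ → ℝ, Partials w Wy Ws Wyy Wys Wss a b := by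
  set K : Set (ℝ × ℝ) := Icc (-1) 1 ×ˢ Icc a b with hK
  set u : ℝ × ℝ → ℝ := fun q => w q.1 q.2 with hu
  have hU : UniqueDiffOn ℝ K :=
    (uniqueDiffOn_Icc (by norm_num)).prod (uniqueDiffOn_Icc hab)
  set f' := fderivWithin ℝ u K with hf'
  set f'' := fderivWithin ℝ f' K with hf''
  have h1 : ContDiffOn ℝ 1 f' K := hw.fderivWithin hU (by norm_num)
  have h2 : ContDiffOn ℝ 0 f'' K := h1.fderivWithin hU (by norm_num)
  have hnh : ∀ y ∈ Ioo (-1 : ℝ) 1, ∀ s ∈ Ioo a b, K ∈ nhds (y, s) := fun y hy s hs =>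
    prod_mem_nhds (Icc_mem_nhds hy.1 hy.2) (Icc_mem_nhds hs.1 hs.2)
  have d1 : ∀ y ∈ Ioo (-1 : ℝ) 1, ∀ s ∈ Ioo a b, HasFDerivAt u (f' (y, s)) (y, s) :=
    fun y hy s hs => ((hw.differentiableOn (by norm_num) (y, s)
      (mem_of_mem_nhds (hnh y hy s hs))).hasFDerivWithinAt).hasFDerivAt (hnh y hy s hs)
  have d2 : ∀ y ∈ Ioo (-1 : ℝ) 1, ∀ s ∈ Ioo a b, HasFDerivAt f' (f'' (y, s)) (y, s) :=
    fun y hy s hs => ((h1.differentiableOn (by norm_num) (y, s)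
      (mem_of_mem_nhds (hnh y hy s hs))).hasFDerivWithinAt).hasFDerivAt (hnh y hy s hs)
  have hsymm : ∀ y ∈ Ioo (-1 : ℝ) 1, ∀ s ∈ Ioo a b, ∀ v v',
      f'' (y, s) v v' = f'' (y, s) v' v := by
    intro y hy s hs v v'
    refine second_derivative_symmetric_of_eventually (f := u) ?_ (d2 y hy s hs) v v'
    filter_upwards [prod_mem_nhds (Ioo_mem_nhds hy.1 hy.2) (Ioo_mem_nhds hs.1 hs.2)] with q hq
    exact d1 q.1 hq.1 q.2 hq.2
  have ly : ∀ y s : ℝ, HasDerivAt (fun z : ℝ => (z, s)) ((1 : ℝ), (0 : ℝ)) y := fun y s =>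
    (hasDerivAt_id y).prodMk (hasDerivAt_const y s)
  have ls : ∀ y s : ℝ, HasDerivAt (fun σ : ℝ => (y, σ)) ((0 : ℝ), (1 : ℝ)) s := fun y s =>
    (hasDerivAt_const s y).prodMk (hasDerivAt_id s)
  have d3 : ∀ y ∈ Ioo (-1 : ℝ) 1, ∀ s ∈ Ioo a b, ∀ e : ℝ × ℝ,
      HasFDerivAt (fun q => f' q e) ((f'' (y, s)).flip e) (y, s) := by
    intro y hy s hs e
    simpa using (d2 y hy s hs).clm_apply (hasFDerivAt_const e (y, s))
  have hc1 : ∀ e : ℝ × ℝ, ContinuousOn (fun q => f' q e) K := fun e =>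
    h1.continuousOn.clm_apply continuousOn_const
  have hc2 : ∀ e d : ℝ × ℝ, ContinuousOn (fun q => f'' q e d) K := fun e d =>
    (h2.continuousOn.clm_apply continuousOn_const).clm_apply continuousOn_const
  refine ⟨fun y s => f' (y, s) (1, 0), fun y s => f' (y, s) (0, 1),
    fun y s => f'' (y, s) (1, 0) (1, 0), fun y s => f'' (y, s) (0, 1) (1, 0),
    fun y s => f'' (y, s) (0, 1) (0, 1), hw.continuousOn, hc1 _, hc1 _, hc2 _ _, hc2 _ _,
    hc2 _ _, ?_, ?_, ?_, ?_, ?_, ?_⟩ <;> intro y hy s hs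
  · exact (d1 y hy s hs).comp_hasDerivAt y (ly y s)
  · exact (d1 y hy s hs).comp_hasDerivAt s (ls y s)
  · exact (d3 y hy s hs (1, 0)).comp_hasDerivAt y (ly y s)
  · exact (d3 y hy s hs (1, 0)).comp_hasDerivAt s (ls y s)
  · rw [hsymm y hy s hs]
    exact (d3 y hy s hs (0, 1)).comp_hasDerivAt y (ly y s)
  · exact (d3 y hy s hs (0, 1)).comp_hasDerivAt s (ls y s)

lemma ae_Ioo_of_uIoc :
    ∀ᵐ y ∂(volume : Measure ℝ), y ∈ uIoc (-1 : ℝ) 1 → y ∈ Ioo (-1 : ℝ) 1 := by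
  have : ∀ᵐ y ∂(volume : Measure ℝ), y ≠ 1 := by simp [ae_iff]
  filter_upwards [this] with y hy h
  rw [uIoc_of_le (by norm_num)] at h
  exact ⟨h.1, lt_of_le_of_ne h.2 hy⟩

/-- Differentiation of `∫ G y σ dy` in `σ`, with the derivative of the integrand needed only for
`y` in the open interval. -/
lemma hasDerivAt_integral_param {G G' : ℝ → ℝ → ℝ} {a b s : ℝ} (hs : s ∈ Ioo a b)
    (hG : ContinuousOn (fun q : ℝ × ℝ => G q.1 q.2) (Icc (-1) 1 ×ˢ Icc a b))
    (hG' : ContinuousOn (fun q : ℝ × ℝ => G' q.1 q.2) (Icc (-1) 1 ×ˢ Icc a b))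
    (hd : ∀ y ∈ Ioo (-1 : ℝ) 1, ∀ σ ∈ Ioo a b, HasDerivAt (fun τ => G y τ) (G' y σ) σ) :
    HasDerivAt (fun σ => ∫ y in (-1 : ℝ)..1, G y σ) (∫ y in (-1 : ℝ)..1, G' y s) s := by
  have hsl : ∀ {H : ℝ → ℝ → ℝ}, ContinuousOn (fun q : ℝ × ℝ => H q.1 q.2)
      (Icc (-1) 1 ×ˢ Icc a b) → ∀ σ ∈ Ioo a b,
      IntervalIntegrable (fun y => H y σ) volume (-1) 1 := by
    intro H hH σ hσ
    apply ContinuousOn.intervalIntegrable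
    rw [uIcc_of_le (by norm_num)]
    exact hH.comp (f := fun y => (y, σ)) (by fun_prop) fun y hy => ⟨hy, Ioo_subset_Icc_self hσ⟩
  obtain ⟨C, hC⟩ := (isCompact_Icc.prod isCompact_Icc).exists_bound_of_continuousOn hG'
  have hae := ae_Ioo_of_uIoc
  refine (intervalIntegral.hasDerivAt_integral_of_dominated_loc_of_deriv_le
    (F := fun σ y => G y σ) (F' := fun σ y => G' y σ) (bound := fun _ => C)
    (Ioo_mem_nhds hs.1 hs.2) ?_ (hsl hG s hs) ?_ ?_ intervalIntegrable_const ?_).2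
  · filter_upwards [Ioo_mem_nhds hs.1 hs.2] with σ hσ
    exact (intervalIntegrable_iff.1 (hsl hG σ hσ)).aestronglyMeasurable
  · exact (intervalIntegrable_iff.1 (hsl hG' s hs)).aestronglyMeasurable
  · filter_upwards [hae] with y hy h σ hσ
    exact hC (y, σ) ⟨Ioo_subset_Icc_self (hy h), Ioo_subset_Icc_self hσ⟩
  · filter_upwards [hae] with y hy h σ hσ
    exact hd y (hy h) σ hσ

/-! ### The weight -/

lemma continuous_rho {p : ℝ} (hp : 1 < p) : Continuous (rho p) := by
  have : 0 ≤ 2 / (p - 1) := div_nonneg (by norm_num) (by linarith)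
  unfold rho
  exact Continuous.rpow_const (by fun_prop) fun _ => Or.inr this

lemma one_sub_sq_pos {y : ℝ} (hy : y ∈ Ioo (-1 : ℝ) 1) : 0 < 1 - y ^ 2 := by
  nlinarith [hy.1, hy.2]

lemma rho_pos {p y : ℝ} (hy : y ∈ Ioo (-1 : ℝ) 1) : 0 < rho p y :=
  Real.rpow_pos_of_pos (one_sub_sq_pos hy) _

lemma rho_endpoint {p : ℝ} (hp : 1 < p) : rho p 1 = 0 ∧ rho p (-1) = 0 := by
  have : 2 / (p - 1) ≠ 0 := (div_pos (by norm_num) (by linarith)).ne'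
  simp [rho, Real.zero_rpow this]

lemma hasDerivAt_rho {p y : ℝ} (hy : y ∈ Ioo (-1 : ℝ) 1) :
    HasDerivAt (rho p) (-2 * (2 / (p - 1)) * y * (rho p y / (1 - y ^ 2))) y := by
  have hω := one_sub_sq_pos hy
  have h1 : HasDerivAt (fun z : ℝ => 1 - z ^ 2) (-2 * y) y := by
    simpa using ((hasDerivAt_id y).pow 2).const_sub 1
  refine (h1.rpow_const (p := 2 / (p - 1)) (Or.inl hω.ne')).congr_deriv ?_
  rw [Real.rpow_sub hω, Real.rpow_one, rho]
  ring

/-- The weight `ρ / (1 - y²)`, possibly singular at `±1`, is integrable: it is nonnegative and, since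
`(yρ)' = (1 + 2α) ρ - 2α ρ / (1 - y²)` with `α = 2 / (p - 1)`, it has a primitive that is
continuous on `[-1, 1]`. -/
lemma intervalIntegrable_rho_div {p : ℝ} (hp : 1 < p) :
    IntervalIntegrable (fun y => rho p y / (1 - y ^ 2)) volume (-1) 1 := by
  have hα : 0 < 2 / (p - 1) := div_pos (by norm_num) (by linarith)
  have hc := continuous_rho hp
  set α := 2 / (p - 1) with hαd
  have hR : ∀ y, HasDerivAt (fun y => ∫ z in (0 : ℝ)..y, rho p z) (rho p y) y := fun y =>
    intervalIntegral.integral_hasDerivAt_right (hc.intervalIntegrable _ _)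
      (hc.stronglyMeasurableAtFilter _ _) hc.continuousAt
  refine intervalIntegral.intervalIntegrable_deriv_of_nonneg
    (g := fun y => ((1 + 2 * α) * (∫ z in (0 : ℝ)..y, rho p z) - y * rho p y) / (2 * α))
    ?_ ?_ ?_
  · apply Continuous.continuousOn
    have : Continuous (fun y => ∫ z in (0 : ℝ)..y, rho p z) :=
      continuous_iff_continuousAt.2 fun y => (hR y).continuousAt
    fun_prop
  · intro y hy
    have hy : y ∈ Ioo (-1 : ℝ) 1 := by simpa using hy
    have hω := one_sub_sq_pos hy
    refine ((((hR y).const_mul (1 + 2 * α)).sub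
      ((hasDerivAt_id' y).mul (hasDerivAt_rho (p := p) hy))).div_const (2 * α)).congr_deriv ?_
    rw [← hαd]
    field_simp
    ring
  · intro y hy
    have hy : y ∈ Ioo (-1 : ℝ) 1 := by simpa using hy
    exact (div_pos (rho_pos hy) (one_sub_sq_pos hy)).le

/-! ### The pointwise quadratic inequality -/

lemma young (x y c d : ℝ) (hc : 0 < c) (h : d ^ 2 ≤ 1) :
    d * (x * y) ≤ c / 2 * x ^ 2 + 1 / (2 * c) * y ^ 2 := by
  have h1 : c / 2 * x ^ 2 + 1 / (2 * c) * y ^ 2 - d * (x * y)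
      = c / 2 * (x - d * y / c) ^ 2 + (1 - d ^ 2) * y ^ 2 / (2 * c) := by
    field_simp
    ring
  have h2 : 0 ≤ c / 2 * (x - d * y / c) ^ 2 := by positivity
  have h3 : 0 ≤ (1 - d ^ 2) * y ^ 2 / (2 * c) := by
    have : 0 ≤ 1 - d ^ 2 := by linarith
    positivity
  linarith

/-- `quad_ineq` in the rescaled variables `S / r`, `r * Y`, `v / r` with `r = √(1 - y²)`, in which
all coefficients of the quadratic form are bounded. -/
lemma quad_ineq_aux {α t b y r S Y v P : ℝ} (hα : 0 < α) (ht : 0 ≤ t) (hb : 0 ≤ b)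
    (hy : y ^ 2 ≤ 1) (hr : r ^ 2 ≤ 1) (hP : 0 ≤ P)
    (h1 : t ≤ 1 / 320) (h2 : t * (2 + 1 / α) ≤ α / 8) (h3 : t * b ^ 2 ≤ 1 / 16)
    (h4 : t * b ≤ α / 8) (h5 : t * b ≤ 1 / (8 * α)) :
    -2 * α * S ^ 2 + t * b * (Y * S)
      + t * (-(r ^ 2 * S ^ 2) + Y ^ 2 + α * (α + 1) * (r ^ 2 * v ^ 2) - P
        - 2 * α * (r ^ 2 * (v * S)) + 4 * α * (v * S) - 2 * y * (Y * S) - t * b * (v * Y))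
      + t / 4 * ((1 + 2 * α) * (r ^ 2 * v ^ 2) + 2 * y * (v * Y) - 2 * α * v ^ 2)
    ≤ (2 + 1 / α) * t * (1 / 2 * (r ^ 2 * S ^ 2) + 1 / 2 * Y ^ 2
        + α * (α + 1) / 2 * (r ^ 2 * v ^ 2) - 1 / (2 + 2 / α) * P - t * (r ^ 2 * (v * S)))
      - α * S ^ 2 := by
  have hS := sq_nonneg S
  have hY := sq_nonneg Y
  have hv := sq_nonneg v
  have hr0 := sq_nonneg r
  have hα' : 0 < 1 / α := by positivity
  have e1 : t * b * (Y * S) ≤ t * (1 / (16 * α) * Y ^ 2) + α / 4 * S ^ 2 := by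
    have hh : b * (Y * S) ≤ 1 / (16 * α) * Y ^ 2 + 4 * α * (b ^ 2 * S ^ 2) := by
      have := young Y (b * S) (1 / (8 * α)) 1 (by positivity) (by norm_num)
      have e : 1 / (2 * (1 / (8 * α))) = 4 * α := by field_simp; norm_num
      have e' : 1 / (8 * α) / 2 = 1 / (16 * α) := by field_simp; norm_num
      rw [e, e'] at this
      linarith
    have h := mul_le_mul_of_nonneg_left hh ht
    have h' := mul_le_mul_of_nonneg_right h3 (by positivity : 0 ≤ 4 * α * S ^ 2)
    linarith
  have e4 : 4 * α * (v * S) - 2 * α * (r ^ 2 * (v * S)) ≤ α / 16 * v ^ 2 + 64 * α * S ^ 2 := by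
    have := young v S (1 / 32) (1 - r ^ 2 / 2) (by norm_num) (by nlinarith)
    have := mul_le_mul_of_nonneg_left this (by positivity : 0 ≤ 4 * α)
    norm_num at this
    linarith
  have e5 : -2 * y * (Y * S) ≤ 1 / (16 * α) * Y ^ 2 + 16 * α * S ^ 2 := by
    have := young Y S (1 / (16 * α)) (-y) (by positivity) (by simpa using hy)
    have e : 1 / (2 * (1 / (16 * α))) = 8 * α := by field_simp; norm_num
    have e' : 1 / (16 * α) / 2 = 1 / (16 * α) * (1 / 2) := by ring
    rw [e, e'] at this
    linarith
  have e6 : -(t * b * (v * Y)) ≤ α / 16 * v ^ 2 + 1 / (16 * α) * Y ^ 2 := by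
    have h0 : 0 ≤ t * b := by positivity
    have i1 : -(t * b * (v * Y)) ≤ t * b * (1 / 2 * v ^ 2) + t * b * (1 / 2 * Y ^ 2) := by
      nlinarith [mul_nonneg h0 (sq_nonneg (v + Y))]
    have i2 := mul_le_mul_of_nonneg_right h4 (by positivity : 0 ≤ 1 / 2 * v ^ 2)
    have i3 := mul_le_mul_of_nonneg_right h5 (by positivity : 0 ≤ 1 / 2 * Y ^ 2)
    have e' : 1 / (8 * α) * (1 / 2 * Y ^ 2) = 1 / (16 * α) * Y ^ 2 := by field_simp; ring
    linarith
  have e7 : (2 + 1 / α) * (t * (r ^ 2 * (v * S))) ≤ α / 16 * v ^ 2 + α / 16 * S ^ 2 := by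
    have h0 : 0 ≤ t * (2 + 1 / α) := by positivity
    have i0 : r ^ 2 * (v * S) ≤ 1 / 2 * v ^ 2 + 1 / 2 * S ^ 2 := by
      have := young v S 1 (r ^ 2) (by norm_num) (by nlinarith)
      norm_num at this
      linarith
    have i1 := mul_le_mul_of_nonneg_left i0 h0
    have i2 := mul_le_mul_of_nonneg_right h2 (by positivity : 0 ≤ 1 / 2 * v ^ 2 + 1 / 2 * S ^ 2)
    linarith
  have e8 : 1 / 4 * ((1 + 2 * α) * (r ^ 2 * v ^ 2)) ≤ (α + 1) / 2 * (r ^ 2 * v ^ 2) := by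
    have : 0 ≤ r ^ 2 * v ^ 2 := by positivity
    linarith
  have e9 : 1 / 2 * y * (v * Y) ≤ α / 4 * v ^ 2 + 1 / (4 * α) * Y ^ 2 := by
    have := young v Y α y hα hy
    have e' : 1 / (2 * α) = 2 * (1 / (4 * α)) := by field_simp; norm_num
    rw [e'] at this
    linarith
  have eP : -P + (2 + 1 / α) * (1 / (2 + 2 / α) * P) ≤ 0 := by
    have : -P + (2 + 1 / α) * (1 / (2 + 2 / α) * P) = - (P / (2 * (α + 1))) := by
      field_simp
      ring
    rw [this]
    have : 0 ≤ P / (2 * (α + 1)) := by positivity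
    linarith
  have eS : 0 ≤ (2 + 1 / α) * (1 / 2 * (r ^ 2 * S ^ 2)) + r ^ 2 * S ^ 2 := by positivity
  have c1 : (2 + 1 / α) * (1 / 2 * Y ^ 2) = Y ^ 2 + 8 * (1 / (16 * α) * Y ^ 2) := by
    field_simp
    ring
  have c2 : (2 + 1 / α) * (α * (α + 1) / 2 * (r ^ 2 * v ^ 2))
      = α * (α + 1) * (r ^ 2 * v ^ 2) + (α + 1) / 2 * (r ^ 2 * v ^ 2) := by
    field_simp
  have c3 : 1 / (4 * α) * Y ^ 2 = 4 * (1 / (16 * α) * Y ^ 2) := by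
    field_simp
    ring
  have hYα : 0 ≤ 1 / (16 * α) * Y ^ 2 := by positivity
  have hvα : 0 ≤ α * v ^ 2 := by positivity
  have hSα : 0 ≤ α * S ^ 2 := by positivity
  have main : (-(r ^ 2 * S ^ 2) + Y ^ 2 + α * (α + 1) * (r ^ 2 * v ^ 2) - P
        - 2 * α * (r ^ 2 * (v * S)) + 4 * α * (v * S) - 2 * y * (Y * S) - t * b * (v * Y))
      + 1 / 4 * ((1 + 2 * α) * (r ^ 2 * v ^ 2) + 2 * y * (v * Y) - 2 * α * v ^ 2)
      ≤ (2 + 1 / α) * (1 / 2 * (r ^ 2 * S ^ 2) + 1 / 2 * Y ^ 2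
        + α * (α + 1) / 2 * (r ^ 2 * v ^ 2) - 1 / (2 + 2 / α) * P - t * (r ^ 2 * (v * S)))
        - 1 / (16 * α) * Y ^ 2 + 81 * (α * S ^ 2) := by
    have split : (2 + 1 / α) * (1 / 2 * (r ^ 2 * S ^ 2) + 1 / 2 * Y ^ 2
        + α * (α + 1) / 2 * (r ^ 2 * v ^ 2) - 1 / (2 + 2 / α) * P - t * (r ^ 2 * (v * S)))
      = (2 + 1 / α) * (1 / 2 * (r ^ 2 * S ^ 2)) + (2 + 1 / α) * (1 / 2 * Y ^ 2)
        + (2 + 1 / α) * (α * (α + 1) / 2 * (r ^ 2 * v ^ 2))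
        - (2 + 1 / α) * (1 / (2 + 2 / α) * P) - (2 + 1 / α) * (t * (r ^ 2 * (v * S))) := by ring
    rw [split, c1, c2]
    linarith
  have m := mul_le_mul_of_nonneg_left main ht
  have m2 := mul_le_mul_of_nonneg_right h1 hSα
  generalize 1 / (2 + 2 / α) = k at *
  generalize 1 / (16 * α) = k1 at *
  generalize 1 / α = k2 at *
  linarith

/-- The left side is the density (divided by `ρ`) of `dF/ds` after integration by parts, with
`α = 2 / (p - 1)`, `t = e^{-s}`, `b = (N - 1) / (r₀ + y e^{-s})`, `S = ∂ₛw`, `Y = ∂ᵧw`, `v = w`,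
`P = |w|^{p+1}`. The bracket after `t / 4` has zero weighted integral (Hardy identity); it supplies
the term `-(α t / 2) v² / (1 - y²)` that absorbs `4 α t v S / (1 - y²)`. Here
`2 + 1 / α = (p + 3) / 2` is the constant `γ`, lying strictly between `2` and `p + 1`. -/
lemma quad_ineq {α t b y S Y v P : ℝ} (hα : 0 < α) (ht : 0 ≤ t) (hb : 0 ≤ b)
    (hy : y ∈ Ioo (-1 : ℝ) 1) (hP : 0 ≤ P)
    (h1 : t ≤ 1 / 320) (h2 : t * (2 + 1 / α) ≤ α / 8) (h3 : t * b ^ 2 ≤ 1 / 16)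
    (h4 : t * b ≤ α / 8) (h5 : t * b ≤ 1 / (8 * α)) :
    -2 * α * (S ^ 2 / (1 - y ^ 2)) + t * b * (Y * S)
      + t * (-S ^ 2 + (1 - y ^ 2) * Y ^ 2 + α * (α + 1) * v ^ 2 - P
        - 2 * α * (v * S) + 4 * α * (v * S / (1 - y ^ 2)) - 2 * y * (Y * S) - t * b * (v * Y))
      + t / 4 * ((1 + 2 * α) * v ^ 2 + 2 * y * (v * Y) - 2 * α * (v ^ 2 / (1 - y ^ 2)))
    ≤ (2 + 1 / α) * t * (1 / 2 * S ^ 2 + 1 / 2 * Y ^ 2 * (1 - y ^ 2)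
        + α * (α + 1) / 2 * v ^ 2 - 1 / (2 + 2 / α) * P - t * (v * S))
      - α * (S ^ 2 / (1 - y ^ 2)) := by
  have hω := one_sub_sq_pos hy
  set r := √(1 - y ^ 2) with hr
  have hr0 : 0 < r := Real.sqrt_pos.2 hω
  have hrr : 1 - y ^ 2 = r ^ 2 := (Real.sq_sqrt hω.le).symm
  have key := quad_ineq_aux (y := y) (r := r) (S := S / r) (Y := Y * r) (v := v / r) hα ht hb
    (by linarith) (by nlinarith [sq_nonneg y]) hP h1 h2 h3 h4 h5
  rw [hrr]
  have a1 : r ^ 2 * (S / r) ^ 2 = S ^ 2 := by field_simp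
  have a2 : r ^ 2 * (v / r) ^ 2 = v ^ 2 := by field_simp
  have a3 : r ^ 2 * (v / r * (S / r)) = v * S := by field_simp
  have a4 : Y * r * (S / r) = Y * S := by field_simp
  have a5 : v / r * (Y * r) = v * Y := by field_simp
  have a6 : v / r * (S / r) = v * S / r ^ 2 := by field_simp
  rw [a1, a2, a3, a4, a5, a6, div_pow, div_pow, mul_pow] at key
  rw [mul_comm (r ^ 2) (Y ^ 2), mul_assoc (1 / 2) (Y ^ 2) (r ^ 2)]
  exact key

/-! ### The differential inequality on a time slice -/

/-- The integrated inequality at a fixed time. All integrations by parts are carried out at once: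
the density of `dF/ds` differs from the left side of `quad_ineq` times `ρ` by the derivative of
`φ ρ`, which vanishes at `y = ±1`. -/
lemma slice_ineq {p t : ℝ} (hp : 1 < p) {b v Y S Yy Ys Ss : ℝ → ℝ}
    (cv : ContinuousOn v (Icc (-1) 1)) (cY : ContinuousOn Y (Icc (-1) 1))
    (cS : ContinuousOn S (Icc (-1) 1)) (cYy : ContinuousOn Yy (Icc (-1) 1))
    (cYs : ContinuousOn Ys (Icc (-1) 1)) (cSs : ContinuousOn Ss (Icc (-1) 1))
    (dv : ∀ y ∈ Ioo (-1 : ℝ) 1, HasDerivAt v (Y y) y)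
    (dY' : ∀ y ∈ Ioo (-1 : ℝ) 1, HasDerivAt Y (Yy y) y)
    (dS' : ∀ y ∈ Ioo (-1 : ℝ) 1, HasDerivAt S (Ys y) y)
    (pde : ∀ y ∈ Ioo (-1 : ℝ) 1, Ss y = (1 - y ^ 2) * Yy y - 2 * (2 / (p - 1) + 1) * y * Y y
      - 2 * (p + 1) / (p - 1) ^ 2 * v y + |v y| ^ (p - 1) * v y
      - (p + 3) / (p - 1) * S y - 2 * y * Ys y + t * b y * Y y)
    (ht : 0 ≤ t) (hb : ∀ y ∈ Ioo (-1 : ℝ) 1, 0 ≤ b y)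
    (h1 : t ≤ 1 / 320) (h2 : t * ((p + 3) / 2) ≤ 2 / (p - 1) / 8)
    (h3 : ∀ y ∈ Ioo (-1 : ℝ) 1, t * b y ^ 2 ≤ 1 / 16)
    (h4 : ∀ y ∈ Ioo (-1 : ℝ) 1, t * b y ≤ 2 / (p - 1) / 8)
    (h5 : ∀ y ∈ Ioo (-1 : ℝ) 1, t * b y ≤ 1 / (8 * (2 / (p - 1)))) :
    ∫ y in (-1 : ℝ)..1, (S y * Ss y + Y y * Ys y * (1 - y ^ 2)
        + 2 * ((p + 1) / (p - 1) ^ 2) * (v y * S y) - |v y| ^ (p - 1) * v y * S y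
        - (-t * (v y * S y) + t * (S y * S y + v y * Ss y))) * rho p y
      ≤ (p + 3) / 2 * t * (∫ y in (-1 : ℝ)..1, (1 / 2 * S y ^ 2 + 1 / 2 * Y y ^ 2 * (1 - y ^ 2)
        + (p + 1) / (p - 1) ^ 2 * v y ^ 2 - 1 / (p + 1) * |v y| ^ (p + 1)
        - t * (v y * S y)) * rho p y)
        - 2 / (p - 1) * ∫ y in (-1 : ℝ)..1, S y ^ 2 * rho p y / (1 - y ^ 2) := by
  have hp1 : 0 < p - 1 := by linarith
  have hρ := continuous_rho hp
  have hρc : ContinuousOn (rho p) (Icc (-1) 1) := hρ.continuousOn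
  have hu : uIcc (-1 : ℝ) 1 = Icc (-1) 1 := uIcc_of_le (by norm_num)
  have cq : ContinuousOn (fun y => |v y| ^ (p - 1)) (Icc (-1) 1) :=
    cv.abs.rpow_const fun _ _ => Or.inr hp1.le
  have cq' : ContinuousOn (fun y => |v y| ^ (p + 1)) (Icc (-1) 1) :=
    cv.abs.rpow_const fun _ _ => Or.inr (by linarith)
  set α := 2 / (p - 1) with hαd
  have hα : 0 < α := div_pos (by norm_num) hp1
  -- the terms come from, in order: the flux, the mixed derivative, the same two tested against
  -- `-t w`, and the Hardy identity
  set φ : ℝ → ℝ := fun y => (1 - y ^ 2) * Y y * S y - y * S y ^ 2 - t * ((1 - y ^ 2) * v y * Y y)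
    + 2 * t * (y * v y * S y) - t / 4 * (y * v y ^ 2) with hφ
  set φ' : ℝ → ℝ := fun y => -2 * y * Y y * S y + (1 - y ^ 2) * Yy y * S y
    + (1 - y ^ 2) * Y y * Ys y - S y ^ 2 - 2 * y * S y * Ys y
    - t * (-2 * y * v y * Y y + (1 - y ^ 2) * Y y * Y y + (1 - y ^ 2) * v y * Yy y)
    + 2 * t * (v y * S y + y * Y y * S y + y * v y * Ys y)
    - t / 4 * (v y ^ 2 + 2 * y * v y * Y y) with hφ'
  have cφ : ContinuousOn φ (Icc (-1) 1) := by
    simp only [hφ]; fun_prop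
  have cφ' : ContinuousOn φ' (Icc (-1) 1) := by
    simp only [hφ']; fun_prop
  have dφ : ∀ y ∈ Ioo (-1 : ℝ) 1, HasDerivAt φ (φ' y) y := by
    intro y hy
    have hw : HasDerivAt (fun z : ℝ => 1 - z ^ 2) (-2 * y) y := by
      simpa using ((hasDerivAt_id y).pow 2).const_sub 1
    have hv := dv y hy
    have hY := dY' y hy
    have hS := dS' y hy
    have hi := hasDerivAt_id' y
    refine ((((((hw.mul hY).mul hS).sub (hi.mul (hS.pow 2))).sub
      (((hw.mul hv).mul hY).const_mul t)).add (((hi.mul hv).mul hS).const_mul (2 * t))).sub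
      ((hi.mul (hv.pow 2)).const_mul (t / 4))).congr_deriv ?_
    simp only [hφ', Pi.mul_apply, Pi.pow_apply]
    push_cast
    ring
  have iX := intervalIntegrable_rho_div hp
  have iΦ : IntervalIntegrable (fun y => φ' y * rho p y
      + rho p y / (1 - y ^ 2) * (-2 * α * y * φ y)) volume (-1) 1 := by
    refine IntervalIntegrable.add ?_ (iX.mul_continuousOn ?_)
    · exact ContinuousOn.intervalIntegrable (by rw [hu]; fun_prop)
    · rw [hu]; fun_prop
  have hΦ : ∫ y in (-1 : ℝ)..1,
      (φ' y * rho p y + rho p y / (1 - y ^ 2) * (-2 * α * y * φ y)) = 0 := by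
    rw [intervalIntegral.integral_eq_sub_of_hasDerivAt_of_le (f := fun y => φ y * rho p y)
      (by norm_num) (by fun_prop) ?_ iΦ]
    · simp [rho_endpoint hp]
    · intro y hy
      refine ((dφ y hy).mul (hasDerivAt_rho (p := p) hy)).congr_deriv ?_
      rw [← hαd]
      ring
  set d : ℝ → ℝ := fun y => (S y * Ss y + Y y * Ys y * (1 - y ^ 2)
        + 2 * ((p + 1) / (p - 1) ^ 2) * (v y * S y) - |v y| ^ (p - 1) * v y * S y
        - (-t * (v y * S y) + t * (S y * S y + v y * Ss y))) * rho p y with hd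
  set f : ℝ → ℝ := fun y => (1 / 2 * S y ^ 2 + 1 / 2 * Y y ^ 2 * (1 - y ^ 2)
        + (p + 1) / (p - 1) ^ 2 * v y ^ 2 - 1 / (p + 1) * |v y| ^ (p + 1)
        - t * (v y * S y)) * rho p y with hf
  have id : IntervalIntegrable d volume (-1) 1 :=
    ContinuousOn.intervalIntegrable (by rw [hu]; simp only [hd]; fun_prop)
  have if' : IntervalIntegrable f volume (-1) 1 :=
    ContinuousOn.intervalIntegrable (by rw [hu]; simp only [hf]; fun_prop)
  have iS : IntervalIntegrable (fun y => S y ^ 2 * rho p y / (1 - y ^ 2)) volume (-1) 1 := by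
    refine (iX.mul_continuousOn (g := fun y => S y ^ 2) (by rw [hu]; fun_prop)).congr ?_
    intro y _
    ring
  calc ∫ y in (-1 : ℝ)..1, d y
      = ∫ y in (-1 : ℝ)..1,
          (d y - (φ' y * rho p y + rho p y / (1 - y ^ 2) * (-2 * α * y * φ y))) := by
        rw [intervalIntegral.integral_sub id iΦ, hΦ, sub_zero]
    _ ≤ ∫ y in (-1 : ℝ)..1, ((p + 3) / 2 * t * f y - α * (S y ^ 2 * rho p y / (1 - y ^ 2))) := by
        refine intervalIntegral.integral_mono_on_of_le_Ioo (by norm_num) (id.sub iΦ)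
          ((if'.const_mul _).sub (iS.const_mul _)) fun y hy => ?_
        have hω := one_sub_sq_pos hy
        have hρ0 := rho_pos (p := p) hy
        have hpα : p = 1 + 2 / α := by rw [hαd]; field_simp; ring
        have hγ : (p + 3) / 2 = 2 + 1 / α := by rw [hpα]; ring
        have hc : (p + 1) / (p - 1) ^ 2 = α * (α + 1) / 2 := by
          rw [hpα]; field_simp; ring
        have hc' : 2 * (p + 1) / (p - 1) ^ 2 = α * (α + 1) := by
          rw [hpα]; field_simp; ring
        have hpp : (p + 3) / (p - 1) = 1 + 2 * α := by
          rw [hpα]; field_simp; ring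
        have hk : 1 / (p + 1) = 1 / (2 + 2 / α) := by rw [hpα]; ring
        have hPq : |v y| ^ (p + 1) = |v y| ^ (p - 1) * v y * v y := by
          have : p + 1 = (p - 1) + (2 : ℕ) := by push_cast; ring
          rw [this, Real.rpow_add_natCast' (abs_nonneg _) (by push_cast; linarith), sq_abs]
          ring
        have key := quad_ineq (S := S y) (Y := Y y) (v := v y) hα ht (hb y hy) hy
          (Real.rpow_nonneg (abs_nonneg (v y)) (p + 1)) h1 (by rw [← hγ]; exact h2) (h3 y hy)
          (h4 y hy) (h5 y hy)
        have key2 := mul_le_mul_of_nonneg_right key hρ0.le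
        simp only [hd, hf, hφ, hφ']
        rw [pde y hy, hc', hc, hpp, hγ, hk]
        refine le_trans (le_of_eq ?_) (key2.trans (le_of_eq ?_))
        · rw [hPq]
          generalize |v y| ^ (p - 1) = q
          field_simp
          ring
        · ring
    _ = _ := by
        rw [intervalIntegral.integral_sub (if'.const_mul _) (iS.const_mul _),
          intervalIntegral.integral_const_mul, intervalIntegral.integral_const_mul]

/-! ### Smallness for large times -/

/-- Consequences of `s ≥ max (log M) (log M - 2 log r₀)` for `t = e^{-s}` and
`b = n / (r₀ + y t)`. The bounds are uniform in `r₀` because `M t ≤ min 1 r₀² ≤ r₀`. -/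
lemma small_bounds {M r₀ n s y : ℝ} (hM : 2 ≤ M) (hr : 0 < r₀) (hn : 0 ≤ n)
    (h1 : Real.log M ≤ s) (h2 : Real.log M - 2 * Real.log r₀ ≤ s) (hy : y ∈ Ioo (-1 : ℝ) 1) :
    M * Real.exp (-s) ≤ 1 ∧ 0 ≤ n / (r₀ + y * Real.exp (-s)) ∧
    M * (Real.exp (-s) * (n / (r₀ + y * Real.exp (-s)))) ≤ 2 * n ∧
    M * (Real.exp (-s) * (n / (r₀ + y * Real.exp (-s))) ^ 2) ≤ 4 * n ^ 2 := by
  have hM0 : 0 < M := by linarith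
  set t := Real.exp (-s) with ht
  have ht0 : 0 < t := Real.exp_pos _
  have e1 : M * t ≤ 1 := by
    calc M * t = Real.exp (Real.log M + -s) := by rw [Real.exp_add, Real.exp_log hM0]
      _ ≤ 1 := Real.exp_le_one_iff.2 (by linarith)
  have e2 : M * t ≤ r₀ ^ 2 := by
    calc M * t = Real.exp (Real.log M + -s) := by rw [Real.exp_add, Real.exp_log hM0]
      _ ≤ Real.exp (Real.log r₀ + Real.log r₀) := Real.exp_le_exp.2 (by linarith)
      _ = r₀ ^ 2 := by rw [Real.exp_add, Real.exp_log hr]; ring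
  have hMt : 0 < M * t := by positivity
  have e3 : M * t ≤ r₀ := by
    by_contra! h
    nlinarith
  have e4 : r₀ / 2 ≤ r₀ + y * t := by nlinarith [hy.1]
  have hpos : 0 < r₀ + y * t := by linarith
  have hb0 : 0 ≤ n / (r₀ + y * t) := by positivity
  have hb : n / (r₀ + y * t) ≤ 2 * n / r₀ := by
    rw [div_le_div_iff₀ hpos hr]
    nlinarith
  refine ⟨e1, hb0, ?_, ?_⟩
  · calc M * (t * (n / (r₀ + y * t))) = (M * t) * (n / (r₀ + y * t)) := by ring
      _ ≤ r₀ * (2 * n / r₀) := by gcongr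
      _ = 2 * n := by field_simp
  · calc M * (t * (n / (r₀ + y * t)) ^ 2) = (M * t) * (n / (r₀ + y * t)) ^ 2 := by ring
      _ ≤ r₀ ^ 2 * (2 * n / r₀) ^ 2 := by gcongr
      _ = 4 * n ^ 2 := by field_simp; ring

/-! ### Assembling the proof -/

/-- `F` as a single integral over the partial derivatives. -/
lemma Fw_eq {p a b : ℝ} (hp : 1 < p) {w Wy Ws Wyy Wys Wss : ℝ → ℝ → ℝ}
    (H : Partials w Wy Ws Wyy Wys Wss a b) {σ : ℝ} (hσ : σ ∈ Ioo a b) :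
    Fw p w σ = ∫ y in (-1 : ℝ)..1, (1 / 2 * Ws y σ ^ 2 + 1 / 2 * Wy y σ ^ 2 * (1 - y ^ 2)
        + (p + 1) / (p - 1) ^ 2 * w y σ ^ 2 - 1 / (p + 1) * |w y σ| ^ (p + 1)
        - Real.exp (-σ) * (w y σ * Ws y σ)) * rho p y := by
  have hu : uIcc (-1 : ℝ) 1 = Icc (-1) 1 := uIcc_of_le (by norm_num)
  have hsl : ∀ {G : ℝ → ℝ → ℝ}, ContinuousOn (fun q : ℝ × ℝ => G q.1 q.2)
      (Icc (-1) 1 ×ˢ Icc a b) → ContinuousOn (fun y => G y σ) (Icc (-1) 1) := fun hG =>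
    hG.comp (f := fun y => (y, σ)) (by fun_prop) fun y hy => ⟨hy, Ioo_subset_Icc_self hσ⟩
  have cv := hsl H.c0
  have cY := hsl H.cy
  have cS := hsl H.cs
  have hρc : ContinuousOn (rho p) (Icc (-1) 1) := (continuous_rho hp).continuousOn
  have cq' : ContinuousOn (fun y => |w y σ| ^ (p + 1)) (Icc (-1) 1) :=
    cv.abs.rpow_const fun _ _ => Or.inr (by linarith)
  have hE : Ew p w σ = ∫ y in (-1 : ℝ)..1, (1 / 2 * Ws y σ ^ 2 + 1 / 2 * Wy y σ ^ 2 * (1 - y ^ 2)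
        + (p + 1) / (p - 1) ^ 2 * w y σ ^ 2 - 1 / (p + 1) * |w y σ| ^ (p + 1)) * rho p y := by
    refine intervalIntegral.integral_congr_ae ?_
    filter_upwards [ae_Ioo_of_uIoc] with y hy h
    rw [dS, dY, (H.ds y (hy h) σ hσ).deriv, (H.dy y (hy h) σ hσ).deriv]
  have hJ : ∫ y in (-1 : ℝ)..1, w y σ * dS w y σ * rho p y
      = ∫ y in (-1 : ℝ)..1, w y σ * Ws y σ * rho p y := by
    refine intervalIntegral.integral_congr_ae ?_
    filter_upwards [ae_Ioo_of_uIoc] with y hy h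
    rw [dS, (H.ds y (hy h) σ hσ).deriv]
  rw [Fw, hE, hJ, ← intervalIntegral.integral_const_mul, ← intervalIntegral.integral_sub]
  · exact intervalIntegral.integral_congr fun y _ => by ring
  · exact ContinuousOn.intervalIntegrable (by rw [hu]; fun_prop)
  · exact ContinuousOn.intervalIntegrable (by rw [hu]; fun_prop)

lemma hasDerivAt_Fw {p a b : ℝ} (hp : 1 < p) {w Wy Ws Wyy Wys Wss : ℝ → ℝ → ℝ}
    (H : Partials w Wy Ws Wyy Wys Wss a b) {s : ℝ} (hs : s ∈ Ioo a b) :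
    HasDerivAt (fun σ => Fw p w σ)
      (∫ y in (-1 : ℝ)..1, (Ws y s * Wss y s + Wy y s * Wys y s * (1 - y ^ 2)
        + 2 * ((p + 1) / (p - 1) ^ 2) * (w y s * Ws y s) - |w y s| ^ (p - 1) * w y s * Ws y s
        - (-Real.exp (-s) * (w y s * Ws y s)
          + Real.exp (-s) * (Ws y s * Ws y s + w y s * Wss y s))) * rho p y) s := by
  have c0 := H.c0
  have cy := H.cy
  have cs := H.cs
  have cys := H.cys
  have css := H.css
  have hρ : ContinuousOn (fun q : ℝ × ℝ => rho p q.1) (Icc (-1) 1 ×ˢ Icc a b) :=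
    ((continuous_rho hp).comp continuous_fst).continuousOn
  have cq : ContinuousOn (fun q : ℝ × ℝ => |w q.1 q.2| ^ (p - 1)) (Icc (-1) 1 ×ˢ Icc a b) :=
    c0.abs.rpow_const fun _ _ => Or.inr (by linarith)
  have cq' : ContinuousOn (fun q : ℝ × ℝ => |w q.1 q.2| ^ (p + 1)) (Icc (-1) 1 ×ˢ Icc a b) :=
    c0.abs.rpow_const fun _ _ => Or.inr (by linarith)
  have key := hasDerivAt_integral_param hs
    (G := fun y σ => (1 / 2 * Ws y σ ^ 2 + 1 / 2 * Wy y σ ^ 2 * (1 - y ^ 2)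
        + (p + 1) / (p - 1) ^ 2 * w y σ ^ 2 - 1 / (p + 1) * |w y σ| ^ (p + 1)
        - Real.exp (-σ) * (w y σ * Ws y σ)) * rho p y)
    (G' := fun y s => (Ws y s * Wss y s + Wy y s * Wys y s * (1 - y ^ 2)
        + 2 * ((p + 1) / (p - 1) ^ 2) * (w y s * Ws y s) - |w y s| ^ (p - 1) * w y s * Ws y s
        - (-Real.exp (-s) * (w y s * Ws y s)
          + Real.exp (-s) * (Ws y s * Ws y s + w y s * Wss y s))) * rho p y)
    (by fun_prop) (by fun_prop) ?_
  · refine key.congr_of_eventuallyEq ?_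
    filter_upwards [Ioo_mem_nhds hs.1 hs.2] with σ hσ
    exact Fw_eq hp H hσ
  · intro y hy σ hσ
    have h1 := H.ds y hy σ hσ
    have h2 := H.dss y hy σ hσ
    have h3 := H.dys y hy σ hσ
    have h4 : HasDerivAt (fun τ => |w y τ| ^ (p + 1))
        ((p + 1) * |w y σ| ^ (p + 1 - 2) * w y σ * Ws y σ) σ :=
      (hasDerivAt_abs_rpow (w y σ) (by linarith : 1 < p + 1)).comp σ h1
    have h5 : HasDerivAt (fun τ : ℝ => Real.exp (-τ)) (-Real.exp (-σ)) σ := by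
      simpa using (hasDerivAt_neg σ).exp
    refine (((((((h2.pow 2).const_mul (1 / 2)).add
      (((h3.pow 2).const_mul (1 / 2)).mul_const (1 - y ^ 2))).add
      ((h1.pow 2).const_mul ((p + 1) / (p - 1) ^ 2))).sub (h4.const_mul (1 / (p + 1)))).sub
      (h5.mul (h1.mul h2))).mul_const (rho p y)).congr_deriv ?_
    have hp1 : p + 1 ≠ 0 := by linarith
    rw [show p + 1 - 2 = p - 1 by ring]
    have e : 1 / (p + 1) * ((p + 1) * |w y σ| ^ (p - 1) * w y σ * Ws y σ)
        = |w y σ| ^ (p - 1) * w y σ * Ws y σ := by field_simp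
    rw [e]
    simp only [Pi.mul_apply]
    push_cast
    ring

/-- The equation in expanded (non-divergence) form, in terms of the partial derivatives. -/
lemma pde_expanded {p r₀ a b : ℝ} {N : ℕ} {I : Set ℝ}
    {w Wy Ws Wyy Wys Wss : ℝ → ℝ → ℝ}
    (hw : IsSolW p N r₀ I w) (H : Partials w Wy Ws Wyy Wys Wss a b) {s : ℝ} (hs : s ∈ Ioo a b)
    (hsI : s ∈ I) {y : ℝ} (hy : y ∈ Ioo (-1 : ℝ) 1) :
    Wss y s = (1 - y ^ 2) * Wyy y s - 2 * (2 / (p - 1) + 1) * y * Wy y s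
      - 2 * (p + 1) / (p - 1) ^ 2 * w y s + |w y s| ^ (p - 1) * w y s
      - (p + 3) / (p - 1) * Ws y s - 2 * y * Wys y s
      + Real.exp (-s) * (((N : ℝ) - 1) / (r₀ + y * Real.exp (-s))) * Wy y s := by
  have h := hw.2.2 y hy s hsI
  have e1 : deriv (fun σ => dS w y σ) s = Wss y s := by
    refine ((H.dss y hy s hs).congr_of_eventuallyEq ?_).deriv
    filter_upwards [Ioo_mem_nhds hs.1 hs.2] with σ hσ
    exact (H.ds y hy σ hσ).deriv
  have e2 : deriv (fun z => dS w z s) y = Wys y s := by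
    refine ((H.dsy y hy s hs).congr_of_eventuallyEq ?_).deriv
    filter_upwards [Ioo_mem_nhds hy.1 hy.2] with z hz
    exact (H.ds z hz s hs).deriv
  have hω := one_sub_sq_pos hy
  have hρ0 := rho_pos (p := p) hy
  have e3 : deriv (fun z => rho p z * (1 - z ^ 2) * dY w z s) y
      = rho p y * ((1 - y ^ 2) * Wyy y s - 2 * (2 / (p - 1) + 1) * y * Wy y s) := by
    have hq : HasDerivAt (fun z : ℝ => 1 - z ^ 2) (-2 * y) y := by
      simpa using ((hasDerivAt_id y).pow 2).const_sub 1
    have hd := ((hasDerivAt_rho (p := p) hy).mul hq).mul (H.dyy y hy s hs)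
    refine ((hd.congr_deriv ?_).congr_of_eventuallyEq ?_).deriv
    · simp only [Pi.mul_apply]
      generalize 2 / (p - 1) = α
      field_simp
      ring
    · filter_upwards [Ioo_mem_nhds hy.1 hy.2] with z hz
      simp only [Pi.mul_apply]
      rw [dY, (H.dy z hz s hs).deriv]
  have e4 : dS w y s = Ws y s := (H.ds y hy s hs).deriv
  have e5 : dY w y s = Wy y s := (H.dy y hy s hs).deriv
  rw [e1, e2, e3, e4, e5] at h
  rw [h, ← mul_assoc, one_div, inv_mul_cancel₀ hρ0.ne', one_mul]

theorem stmt0 :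
    ∀ p : ℝ, 1 < p →
      ∃ γ : ℝ, 0 < γ ∧
        ∀ N : ℕ, 1 ≤ N →
          ∃ S₀ : ℝ,
            ∀ r₀ : ℝ, 0 < r₀ → ∀ I : Set ℝ, I.OrdConnected →
              ∀ w : ℝ → ℝ → ℝ, IsSolW p N r₀ I w →
                ∀ s ∈ interior I, max S₀ (S₀ - 2 * Real.log r₀) ≤ s →
                  ∃ D : ℝ, HasDerivAt (fun σ => Fw p w σ) D s ∧
                    D ≤ γ * Real.exp (-s) * Fw p w s
                        - 2 / (p - 1) *
                          ∫ y in (-1 : ℝ)..1, dS w y s ^ 2 * rho p y / (1 - y ^ 2) := by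
  intro p hp
  have hp1 : 0 < p - 1 := by linarith
  refine ⟨(p + 3) / 2, by linarith, fun N hN => ?_⟩
  have hα : 0 < 2 / (p - 1) := div_pos (by norm_num) hp1
  have hγ : 0 < (p + 3) / 2 := by linarith
  set α := 2 / (p - 1) with hαd
  set γ := (p + 3) / 2 with hγd
  set n : ℝ := (N : ℝ) - 1 with hnd
  have hn : 0 ≤ n := by
    have : (1 : ℝ) ≤ N := by exact_mod_cast hN
    linarith
  -- each summand of `M` enforces one of the smallness conditions of `slice_ineq`
  set M : ℝ := 320 + 8 * γ / α + 64 * n ^ 2 + 16 * n / α + 16 * n * α with hM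
  have p1 : 0 ≤ 8 * γ / α := by positivity
  have p2 : 0 ≤ 64 * n ^ 2 := by positivity
  have p3 : 0 ≤ 16 * n / α := by positivity
  have p4 : 0 ≤ 16 * n * α := by positivity
  have hM2 : 2 ≤ M := by linarith
  refine ⟨Real.log M, fun r₀ hr I _ w hw s hs hmax => ?_⟩
  obtain ⟨ε, hε, hball⟩ := Metric.mem_nhds_iff.1 (mem_interior_iff_mem_nhds.1 hs)
  have hsub : Icc (s - ε / 2) (s + ε / 2) ⊆ I := fun x hx => hball (by
    rw [Metric.mem_ball, Real.dist_eq, abs_lt]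
    constructor <;> linarith [hx.1, hx.2])
  have hsm : s ∈ Ioo (s - ε / 2) (s + ε / 2) := ⟨by linarith, by linarith⟩
  obtain ⟨Wy, Ws, Wyy, Wys, Wss, H⟩ := exists_partials (by linarith : s - ε / 2 < s + ε / 2)
    (hw.1.mono (prod_mono_right hsub))
  refine ⟨_, hasDerivAt_Fw hp H hsm, ?_⟩
  have hX : ∫ y in (-1 : ℝ)..1, dS w y s ^ 2 * rho p y / (1 - y ^ 2)
      = ∫ y in (-1 : ℝ)..1, Ws y s ^ 2 * rho p y / (1 - y ^ 2) := by
    refine intervalIntegral.integral_congr_ae ?_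
    filter_upwards [ae_Ioo_of_uIoc] with y hy h
    rw [dS, (H.ds y (hy h) s hsm).deriv]
  rw [Fw_eq hp H hsm, hX]
  have hsl : ∀ {G : ℝ → ℝ → ℝ}, ContinuousOn (fun q : ℝ × ℝ => G q.1 q.2)
      (Icc (-1) 1 ×ˢ Icc (s - ε / 2) (s + ε / 2)) →
      ContinuousOn (fun y => G y s) (Icc (-1) 1) := fun hG =>
    hG.comp (f := fun y => (y, s)) (by fun_prop) fun y hy => ⟨hy, Ioo_subset_Icc_self hsm⟩
  have sb := fun (y : ℝ) (hy : y ∈ Ioo (-1 : ℝ) 1) => small_bounds hM2 hr hn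
    ((le_max_left _ _).trans hmax) ((le_max_right _ _).trans hmax) hy
  have ht0 : 0 < Real.exp (-s) := Real.exp_pos _
  have hMt := (sb 0 (by norm_num)).1
  have hM0 : 0 < M := by linarith
  refine slice_ineq hp (b := fun y => n / (r₀ + y * Real.exp (-s))) (hsl H.c0) (hsl H.cy)
    (hsl H.cs) (hsl H.cyy) (hsl H.cys) (hsl H.css) (fun y hy => H.dy y hy s hsm)
    (fun y hy => H.dyy y hy s hsm) (fun y hy => H.dsy y hy s hsm)
    (fun y hy => pde_expanded hw H hsm (interior_subset hs) hy) ht0.le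
    (fun y hy => (sb y hy).2.1) ?_ ?_ (fun y hy => ?_) (fun y hy => ?_) (fun y hy => ?_)
  · nlinarith
  · rw [← hγd, ← hαd]
    have h : 8 * γ / α * Real.exp (-s) ≤ 1 :=
      (mul_le_mul_of_nonneg_right (by linarith) ht0.le).trans hMt
    have e : Real.exp (-s) * γ = 8 * γ / α * Real.exp (-s) * (α / 8) := by field_simp
    rw [e]
    exact mul_le_of_le_one_left (by positivity) h
  · refine le_of_mul_le_mul_left ((sb y hy).2.2.2.trans ?_) hM0
    linarith
  · refine le_of_mul_le_mul_left ((sb y hy).2.2.1.trans ?_) hM0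
    have e : 2 * n = 16 * n / α * (α / 8) := by field_simp; ring
    rw [← hαd, e]
    exact mul_le_mul_of_nonneg_right (by linarith) (by positivity)
  · refine le_of_mul_le_mul_left ((sb y hy).2.2.1.trans ?_) hM0
    have e : 2 * n = 16 * n * α * (1 / (8 * α)) := by field_simp; ring
    rw [← hαd, e]
    exact mul_le_mul_of_nonneg_right (by linarith) (by positivity)

end
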